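/- Suppose each A_k has full column rank with λ_min(A_k^T A_k) ≥ σ_k² for constants σ_k > 0, and let σ_min := min_k σ_k. Then for every r ≥ 0 the cyclic exact BCD iterates satisfy f(x^{(r+1)}) − f* ≤ R_0 · (1/σ_min) · log(2NK) · (L + L_max) · √(Σ_{k=1}^K σ_k² ‖x_k^{(r+1)} − x_k^{(r)}‖²). -/

import Mathlib

open Finset

/-- Squared Euclidean norm of a vector in `ℝ^n`. -/
noncomputable def sqnorm {n : ℕ} (v : Fin n → ℝ) : ℝ := ∑ i, v i ^ 2

/-- Euclidean inner product on `ℝ^n`. -/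
noncomputable def dotp {n : ℕ} (u v : Fin n → ℝ) : ℝ := ∑ i, u i * v i

/-- `λ_max(AᵀA)` for a real matrix `A`, characterized as the maximum of `‖Av‖²`
over unit vectors `v`. -/
noncomputable def lamMaxQ {M N : ℕ} (A : Matrix (Fin M) (Fin N) ℝ) : ℝ :=
  sSup {r : ℝ | ∃ v : Fin N → ℝ, sqnorm v = 1 ∧ r = sqnorm (A.mulVec v)}

/-- `λ_min(AᵀA)` for a real matrix `A`, characterized as the minimum of `‖Av‖²`
over unit vectors `v`. -/
noncomputable def lamMinQ {M N : ℕ} (A : Matrix (Fin M) (Fin N) ℝ) : ℝ :=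
  sInf {r : ℝ | ∃ v : Fin N → ℝ, sqnorm v = 1 ∧ r = sqnorm (A.mulVec v)}

/-- `λ_max(AᵀA)` for the concatenated matrix `A = [A_1 ⋯ A_K]`, acting on block
vectors. -/
noncomputable def lamMaxBlock {K M N : ℕ} (A : Fin K → Matrix (Fin M) (Fin N) ℝ) : ℝ :=
  sSup {r : ℝ | ∃ v : Fin K → Fin N → ℝ, (∑ k, sqnorm (v k)) = 1 ∧
    r = sqnorm (∑ k, (A k).mulVec (v k))}

/-- Maximum of a finite family of reals indexed by `Fin K`, `K ≥ 1`. -/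
noncomputable def maxOf {K : ℕ} (hK : 1 ≤ K) (P : Fin K → ℝ) : ℝ :=
  Finset.univ.sup' (Finset.univ_nonempty_iff.mpr ⟨⟨0, hK⟩⟩) P

/-- Minimum of a finite family of reals indexed by `Fin K`, `K ≥ 1`. -/
noncomputable def minOf {K : ℕ} (hK : 1 ≤ K) (P : Fin K → ℝ) : ℝ :=
  Finset.univ.inf' (Finset.univ_nonempty_iff.mpr ⟨⟨0, hK⟩⟩) P

/-- The residual `Σ_k A_k x_k − b`. -/
noncomputable def resid {K M N : ℕ} (A : Fin K → Matrix (Fin M) (Fin N) ℝ)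
    (b : Fin M → ℝ) (x : Fin K → Fin N → ℝ) : Fin M → ℝ :=
  (∑ k, (A k).mulVec (x k)) - b

/-- The smooth part `g(x) = (1/2)‖Σ_k A_k x_k − b‖²`. -/
noncomputable def gq {K M N : ℕ} (A : Fin K → Matrix (Fin M) (Fin N) ℝ)
    (b : Fin M → ℝ) (x : Fin K → Fin N → ℝ) : ℝ :=
  (1 / 2) * sqnorm (resid A b x)

/-- The objective `f(x) = g(x) + Σ_k h_k(x_k)`. -/
noncomputable def fq {K M N : ℕ} (A : Fin K → Matrix (Fin M) (Fin N) ℝ)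
    (b : Fin M → ℝ) (h : Fin K → (Fin N → ℝ) → ℝ) (x : Fin K → Fin N → ℝ) : ℝ :=
  gq A b x + ∑ k, h k (x k)

/-- The partial gradient `∇_k g(x) = A_kᵀ (Σ_j A_j x_j − b)`. -/
noncomputable def gradk {K M N : ℕ} (A : Fin K → Matrix (Fin M) (Fin N) ℝ)
    (b : Fin M → ℝ) (x : Fin K → Fin N → ℝ) (k : Fin K) : Fin N → ℝ :=
  ((A k).transpose).mulVec (resid A b x)

/-- The intermediate point `w_k^{(r+1)}` of the cycle: blocks `j < k` come from
`x^{(r+1)} = xp`, the remaining blocks from `x^{(r)} = x`. -/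
def wpt {K N : ℕ} (x xp : Fin K → Fin N → ℝ) (k : Fin K) : Fin K → Fin N → ℝ :=
  fun j => if j < k then xp j else x j

/-- The objective of the `k`-th BCPG prox subproblem at the point
`w_k^{(r+1)} = wpt x xp k`, evaluated at candidate block `y`. -/
noncomputable def bcpgObj {K M N : ℕ} (A : Fin K → Matrix (Fin M) (Fin N) ℝ)
    (b : Fin M → ℝ) (h : Fin K → (Fin N → ℝ) → ℝ) (P : Fin K → ℝ)
    (x xp : Fin K → Fin N → ℝ) (k : Fin K) (y : Fin N → ℝ) : ℝ :=
  dotp (gradk A b (wpt x xp k) k) (y - x k) + (P k / 2) * sqnorm (y - x k) + h k y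

/-- One cycle of cyclic BCPG: `xp = x^{(r+1)}` is obtained from `x = x^{(r)}`
by letting, for `k = 1,…,K`, the `k`-th block minimize the prox subproblem at
`w_k^{(r+1)}` over `X_k`. -/
def BCPGStep {K M N : ℕ} (A : Fin K → Matrix (Fin M) (Fin N) ℝ)
    (b : Fin M → ℝ) (h : Fin K → (Fin N → ℝ) → ℝ)
    (X : Fin K → Set (Fin N → ℝ)) (P : Fin K → ℝ)
    (x xp : Fin K → Fin N → ℝ) : Prop :=
  ∀ k : Fin K, xp k ∈ X k ∧ ∀ y ∈ X k,
    bcpgObj A b h P x xp k (xp k) ≤ bcpgObj A b h P x xp k y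

/-- One cycle of cyclic exact BCD: `xp = x^{(r+1)}` is obtained from
`x = x^{(r)}` by letting, for `k = 1,…,K`, the `k`-th block minimize
`f(x_1^{(r+1)},…,x_{k−1}^{(r+1)}, ·, x_{k+1}^{(r)},…,x_K^{(r)})` over `X_k`. -/
def BCDStep {K M N : ℕ} (A : Fin K → Matrix (Fin M) (Fin N) ℝ)
    (b : Fin M → ℝ) (h : Fin K → (Fin N → ℝ) → ℝ)
    (X : Fin K → Set (Fin N → ℝ))
    (x xp : Fin K → Fin N → ℝ) : Prop :=
  ∀ k : Fin K, xp k ∈ X k ∧ ∀ y ∈ X k,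
    fq A b h (Function.update (wpt x xp k) k (xp k)) ≤
      fq A b h (Function.update (wpt x xp k) k y)

lemma bh_sq {n : ℕ} (v : Fin n → ℝ) : sqnorm v = v ⬝ᵥ v := by
  simp [sqnorm, dotProduct, sq]

lemma bh_nn {n : ℕ} (v : Fin n → ℝ) : 0 ≤ sqnorm v := by
  unfold sqnorm; positivity

lemma bh_add {n : ℕ} (u v : Fin n → ℝ) :
    sqnorm (u + v) = sqnorm u + 2 * (u ⬝ᵥ v) + sqnorm v := by
  simp only [bh_sq, add_dotProduct, dotProduct_add, dotProduct_comm v u]; ring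

lemma bh_smul {n : ℕ} (t : ℝ) (v : Fin n → ℝ) : sqnorm (t • v) = t ^ 2 * sqnorm v := by
  simp only [bh_sq, smul_dotProduct, dotProduct_smul, smul_eq_mul]; ring

lemma bh_bdd {K M N : ℕ} (A : Fin K → Matrix (Fin M) (Fin N) ℝ) :
    BddAbove {r : ℝ | ∃ v : Fin K → Fin N → ℝ, (∑ k, sqnorm (v k)) = 1 ∧
      r = sqnorm (∑ k, (A k).mulVec (v k))} := by
  refine ⟨∑ m, ∑ p : Fin K × Fin N, (A p.1 m p.2) ^ 2, ?_⟩
  rintro r ⟨v, hv, rfl⟩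
  unfold sqnorm
  refine Finset.sum_le_sum fun m _ => ?_
  have h1 : (∑ k, (A k).mulVec (v k)) m = ∑ p : Fin K × Fin N, A p.1 m p.2 * v p.1 p.2 := by
    rw [Fintype.sum_prod_type, Finset.sum_apply]
    rfl
  have h2 : ∑ p : Fin K × Fin N, v p.1 p.2 ^ 2 = 1 := by
    rw [Fintype.sum_prod_type, ← hv]; rfl
  rw [h1]
  have := Finset.sum_mul_sq_le_sq_mul_sq Finset.univ (fun p : Fin K × Fin N => A p.1 m p.2)
    (fun p => v p.1 p.2)
  simpa [h2] using this

lemma bh_L {K M N : ℕ} (A : Fin K → Matrix (Fin M) (Fin N) ℝ) (v : Fin K → Fin N → ℝ) :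
    sqnorm (∑ k, (A k).mulVec (v k)) ≤ lamMaxBlock A * ∑ k, sqnorm (v k) := by
  have hs : 0 ≤ ∑ k, sqnorm (v k) := Finset.sum_nonneg fun k _ => bh_nn _
  rcases hs.eq_or_lt with h0 | hpos
  · have hv : ∀ k, v k = 0 := by
      intro k
      have := (Finset.sum_eq_zero_iff_of_nonneg (fun k _ => bh_nn (v k))).1 h0.symm k (Finset.mem_univ _)
      rw [bh_sq] at this
      exact dotProduct_self_eq_zero.1 this
    simp [hv, sqnorm]
  · set s := ∑ k, sqnorm (v k) with hsd
    have hss : (√s)⁻¹ ^ 2 = s⁻¹ := by rw [inv_pow, Real.sq_sqrt hs]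
    have := le_csSup (bh_bdd A) ⟨fun k => (√s)⁻¹ • v k, by
      simp only [bh_smul, ← Finset.mul_sum, hss, ← hsd]
      exact inv_mul_cancel₀ hpos.ne', rfl⟩
    simp only [Matrix.mulVec_smul, ← Finset.smul_sum, bh_smul, hss] at this
    change _ ≤ lamMaxBlock A at this
    rw [inv_mul_le_iff₀ hpos] at this
    linarith

lemma bh_Lnn {K M N : ℕ} (A : Fin K → Matrix (Fin M) (Fin N) ℝ) : 0 ≤ lamMaxBlock A := by
  apply Real.sSup_nonneg
  rintro r ⟨v, _, rfl⟩
  exact bh_nn _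

lemma bh_Lnn' {M N : ℕ} (A : Matrix (Fin M) (Fin N) ℝ) : 0 ≤ lamMaxQ A := by
  apply Real.sSup_nonneg
  rintro r ⟨v, _, rfl⟩
  exact bh_nn _

lemma bh_cross_aux {K M N : ℕ} (A : Fin K → Matrix (Fin M) (Fin N) ℝ) (u v : Fin K → Fin N → ℝ)
    (S T : Finset (Fin K)) (hST : Disjoint S T) (s t : ℝ) :
    sqnorm (s • (∑ k ∈ S, (A k).mulVec (u k)) + t • (∑ k ∈ T, (A k).mulVec (v k))) ≤
      lamMaxBlock A * (s ^ 2 * ∑ k ∈ S, sqnorm (u k) + t ^ 2 * ∑ k ∈ T, sqnorm (v k)) := by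
  have h := bh_L A (fun k => if k ∈ S then s • u k else if k ∈ T then t • v k else 0)
  have key : ∀ {E : Type} [AddCommMonoid E] (F G : Fin K → E),
      ∑ k, (if k ∈ S then F k else if k ∈ T then G k else 0) = ∑ k ∈ S, F k + ∑ k ∈ T, G k := by
    intro E _ F G
    have h1 : ∑ k ∈ S, F k = ∑ k, if k ∈ S then F k else 0 := by simp
    have h2 : ∑ k ∈ T, G k = ∑ k, if k ∈ T then G k else 0 := by simp
    rw [h1, h2, ← Finset.sum_add_distrib]
    refine Finset.sum_congr rfl fun k _ => ?_
    by_cases hk : k ∈ S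
    · simp [hk, Finset.disjoint_left.1 hST hk]
    · simp [hk]
  have e1 : ∑ k, (A k).mulVec (if k ∈ S then s • u k else if k ∈ T then t • v k else 0) =
      s • (∑ k ∈ S, (A k).mulVec (u k)) + t • (∑ k ∈ T, (A k).mulVec (v k)) := by
    rw [Finset.smul_sum, Finset.smul_sum, ← key]
    refine Finset.sum_congr rfl fun k _ => ?_
    split_ifs <;> simp [Matrix.mulVec_smul]
  have e2 : ∑ k, sqnorm (if k ∈ S then s • u k else if k ∈ T then t • v k else 0) =
      s ^ 2 * ∑ k ∈ S, sqnorm (u k) + t ^ 2 * ∑ k ∈ T, sqnorm (v k) := by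
    rw [Finset.mul_sum, Finset.mul_sum, ← key]
    refine Finset.sum_congr rfl fun k _ => ?_
    split_ifs
    · exact bh_smul _ _
    · exact bh_smul _ _
    · simp [sqnorm]
  rw [e1, e2] at h
  exact h

lemma bh_zero {n : ℕ} {v : Fin n → ℝ} (h : sqnorm v ≤ 0) : v = 0 := by
  have : sqnorm v = 0 := le_antisymm h (bh_nn v)
  rw [bh_sq] at this
  exact dotProduct_self_eq_zero.1 this

lemma bh_cross {K M N : ℕ} (A : Fin K → Matrix (Fin M) (Fin N) ℝ) (u v : Fin K → Fin N → ℝ)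
    (S T : Finset (Fin K)) (hST : Disjoint S T) :
    ∑ k ∈ S, ∑ j ∈ T, ((A k).mulVec (u k) ⬝ᵥ (A j).mulVec (v j)) ≤
      lamMaxBlock A / 2 * (√(∑ k ∈ S, sqnorm (u k)) * √(∑ k ∈ T, sqnorm (v k))) := by
  have hB := bh_cross_aux A u v S T hST
  have e : ∑ k ∈ S, ∑ j ∈ T, ((A k).mulVec (u k) ⬝ᵥ (A j).mulVec (v j)) =
      (∑ k ∈ S, (A k).mulVec (u k)) ⬝ᵥ (∑ j ∈ T, (A j).mulVec (v j)) := by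
    simp only [sum_dotProduct, dotProduct_sum]
    exact Finset.sum_comm
  rw [e]
  set p := ∑ k ∈ S, (A k).mulVec (u k)
  set q := ∑ j ∈ T, (A j).mulVec (v j)
  have hα : 0 ≤ ∑ k ∈ S, sqnorm (u k) := Finset.sum_nonneg fun k _ => bh_nn _
  have hβ : 0 ≤ ∑ k ∈ T, sqnorm (v k) := Finset.sum_nonneg fun k _ => bh_nn _
  set α := ∑ k ∈ S, sqnorm (u k)
  set β := ∑ k ∈ T, sqnorm (v k)
  rcases hα.eq_or_lt with h0 | hα'
  · have := hB 1 0
    simp only [← h0, one_smul, zero_smul, add_zero] at this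
    have hp : p = 0 := bh_zero (by simpa using this)
    simp [hp, ← h0]
  rcases hβ.eq_or_lt with h0 | hβ'
  · have := hB 0 1
    simp only [← h0, one_smul, zero_smul, zero_add] at this
    have hp : q = 0 := bh_zero (by simpa using this)
    simp [hp, ← h0]
  have h1 := hB (√β) (√α)
  have h2 := bh_nn (√β • p + (-√α) • q)
  rw [bh_add, bh_smul, bh_smul, smul_dotProduct, dotProduct_smul] at h1 h2
  simp only [smul_eq_mul, neg_sq, Real.sq_sqrt hα, Real.sq_sqrt hβ] at h1 h2
  have hm : 0 < √α * √β := mul_pos (Real.sqrt_pos.2 hα') (Real.sqrt_pos.2 hβ')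
  have hab : (√α * √β) * (√α * √β) = α * β := by
    rw [mul_mul_mul_comm, Real.mul_self_sqrt hα, Real.mul_self_sqrt hβ]
  refine le_of_mul_le_mul_left ?_ hm
  have : √α * √β * (lamMaxBlock A / 2 * (√α * √β)) = lamMaxBlock A / 2 * (α * β) := by
    rw [← hab]; ring
  rw [this]
  nlinarith

lemma bh_trunc {K : ℕ} (c : Fin K → Fin K → ℝ) (α β : Fin K → ℝ) (C : ℝ) (hC : 0 ≤ C)
    (hα : ∀ k, 0 ≤ α k) (hβ : ∀ k, 0 ≤ β k)
    (hc : ∀ S T : Finset (Fin K), Disjoint S T →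
      ∑ k ∈ S, ∑ j ∈ T, c k j ≤ C * (√(∑ k ∈ S, α k) * √(∑ k ∈ T, β k))) (m : ℕ) :
    ∀ (a : ℕ) (I : Finset (Fin K)), (∀ k ∈ I, a ≤ k.val ∧ k.val < a + 2 ^ m) →
      ∑ k ∈ I, ∑ j ∈ I, (if k < j then c k j else 0) ≤
        m * C * (√(∑ k ∈ I, α k) * √(∑ k ∈ I, β k)) := by
  induction m with
  | zero =>
    intro a I hI
    simp only [Nat.cast_zero, zero_mul]
    refine le_of_eq (Finset.sum_eq_zero fun k hk => Finset.sum_eq_zero fun j hj => ?_)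
    have := hI k hk
    have := hI j hj
    rw [if_neg]
    rw [Fin.lt_def]; simp at *; omega
  | succ m ih =>
    intro a I hI
    set P : Fin K → Prop := fun k => k.val < a + 2 ^ m with hP
    set S := I.filter P with hS
    set T := I.filter (fun k => ¬ P k) with hT
    have hST : Disjoint S T := Finset.disjoint_filter_filter_not _ _ _
    have split : ∀ F : Fin K → ℝ, ∑ k ∈ I, F k = ∑ k ∈ S, F k + ∑ k ∈ T, F k := fun F =>
      (Finset.sum_filter_add_sum_filter_not I P F).symm
    have hSm : ∀ k ∈ S, a ≤ k.val ∧ k.val < a + 2 ^ m := by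
      intro k hk
      rw [hS, Finset.mem_filter] at hk
      exact ⟨(hI k hk.1).1, hk.2⟩
    have hTm : ∀ k ∈ T, a + 2 ^ m ≤ k.val ∧ k.val < a + 2 ^ m + 2 ^ m := by
      intro k hk
      rw [hT, Finset.mem_filter] at hk
      have := (hI k hk.1).2
      have h2 := hk.2
      simp only [hP, not_lt] at h2
      rw [pow_succ] at this
      exact ⟨h2, by omega⟩
    have e1 : ∑ k ∈ S, ∑ j ∈ T, (if k < j then c k j else 0) = ∑ k ∈ S, ∑ j ∈ T, c k j := by
      refine Finset.sum_congr rfl fun k hk => Finset.sum_congr rfl fun j hj => if_pos ?_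
      have := hSm k hk
      have := hTm j hj
      rw [Fin.lt_def]; omega
    have e2 : ∑ k ∈ T, ∑ j ∈ S, (if k < j then c k j else 0) = 0 := by
      refine Finset.sum_eq_zero fun k hk => Finset.sum_eq_zero fun j hj => if_neg ?_
      have := hTm k hk
      have := hSm j hj
      rw [Fin.lt_def]; omega
    have e : ∑ k ∈ I, ∑ j ∈ I, (if k < j then c k j else 0) =
        ∑ k ∈ S, ∑ j ∈ S, (if k < j then c k j else 0) + ∑ k ∈ S, ∑ j ∈ T, c k j +
        ∑ k ∈ T, ∑ j ∈ T, (if k < j then c k j else 0) := by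
      rw [split]
      have : ∀ k, ∑ j ∈ I, (if k < j then c k j else 0) =
        ∑ j ∈ S, (if k < j then c k j else 0) + ∑ j ∈ T, (if k < j then c k j else 0) :=
          fun k => split _
      simp only [this, Finset.sum_add_distrib]
      rw [e1, e2]; ring
    rw [e, split α, split β]
    have i1 := ih a S hSm
    have i2 := ih _ T hTm
    have i3 := hc S T hST
    have n1 : 0 ≤ ∑ k ∈ S, α k := Finset.sum_nonneg fun k _ => hα k
    have n2 : 0 ≤ ∑ k ∈ T, α k := Finset.sum_nonneg fun k _ => hα k
    have n3 : 0 ≤ ∑ k ∈ S, β k := Finset.sum_nonneg fun k _ => hβ k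
    have n4 : 0 ≤ ∑ k ∈ T, β k := Finset.sum_nonneg fun k _ => hβ k
    set a1 := ∑ k ∈ S, α k
    set a2 := ∑ k ∈ T, α k
    set b1 := ∑ k ∈ S, β k
    set b2 := ∑ k ∈ T, β k
    have cs : √a1 * √b1 + √a2 * √b2 ≤ √(a1 + a2) * √(b1 + b2) := by
      rw [← Real.sqrt_mul (by linarith : 0 ≤ a1 + a2)]
      apply Real.le_sqrt_of_sq_le
      have q1 := Real.sq_sqrt n1
      have q2 := Real.sq_sqrt n2
      have q3 := Real.sq_sqrt n3
      have q4 := Real.sq_sqrt n4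
      calc (√a1 * √b1 + √a2 * √b2) ^ 2
          ≤ (√a1 ^ 2 + √a2 ^ 2) * (√b1 ^ 2 + √b2 ^ 2) := by
            nlinarith [sq_nonneg (√a1 * √b2 - √a2 * √b1)]
        _ = _ := by rw [q1, q2, q3, q4]
    have mono : √a1 * √b2 ≤ √(a1 + a2) * √(b1 + b2) := by
      gcongr <;> linarith
    have hmC : 0 ≤ (m : ℝ) * C := by positivity
    have j1 := mul_le_mul_of_nonneg_left cs hmC
    have j2 := mul_le_mul_of_nonneg_left mono hC
    push_cast
    linarith

lemma bh_log (K : ℕ) (hK : 1 ≤ K) : ∃ m : ℕ, K ≤ 2 ^ m ∧ (m : ℝ) / 2 ≤ Real.log (2 * K) := by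
  refine ⟨Nat.log 2 K + 1, (Nat.lt_pow_succ_log_self (by norm_num) K).le, ?_⟩
  have h : 2 ^ (Nat.log 2 K) ≤ K := Nat.pow_log_le_self 2 (by omega)
  have h1 : (2 : ℝ) ^ (Nat.log 2 K + 1) ≤ 2 * K := by
    rw [pow_succ]
    have : ((2 : ℝ) ^ (Nat.log 2 K)) ≤ K := by exact_mod_cast h
    linarith
  have h2 := Real.log_le_log (by positivity) h1
  rw [Real.log_pow] at h2
  have := Real.log_two_gt_d9
  have h3 : (0 : ℝ) ≤ ((Nat.log 2 K + 1 : ℕ) : ℝ) := by positivity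
  nlinarith

lemma bh_tri {K M N : ℕ} (hK : 1 ≤ K) (A : Fin K → Matrix (Fin M) (Fin N) ℝ)
    (u v : Fin K → Fin N → ℝ) :
    ∑ k, ∑ j, (if k < j then ((A k).mulVec (u k) ⬝ᵥ (A j).mulVec (v j)) else 0) ≤
      Real.log (2 * K) * lamMaxBlock A * (√(∑ k, sqnorm (u k)) * √(∑ k, sqnorm (v k))) := by
  obtain ⟨m, hm, hl⟩ := bh_log K hK
  have hL := bh_Lnn A
  refine (bh_trunc _ (fun k => sqnorm (u k)) (fun k => sqnorm (v k)) (lamMaxBlock A / 2)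
    (by positivity) (fun k => bh_nn _) (fun k => bh_nn _) (bh_cross A u v) m 0 Finset.univ
    (fun k _ => ⟨Nat.zero_le _, by have := k.2; omega⟩)).trans ?_
  refine mul_le_mul_of_nonneg_right ?_ (by positivity)
  nlinarith

lemma bh_resid_update {K M N : ℕ} (A : Fin K → Matrix (Fin M) (Fin N) ℝ) (b : Fin M → ℝ)
    (w : Fin K → Fin N → ℝ) (k : Fin K) (y z : Fin N → ℝ) :
    resid A b (Function.update w k z) =
      resid A b (Function.update w k y) + (A k).mulVec (z - y) := by
  have e : ∀ y, ∑ j, (A j).mulVec (Function.update w k y j) =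
      (A k).mulVec y + ∑ j ∈ Finset.univ.erase k, (A j).mulVec (w j) := by
    intro y
    rw [← Finset.add_sum_erase _ _ (Finset.mem_univ k)]
    congr 1
    · simp
    · refine Finset.sum_congr rfl fun j hj => ?_
      rw [Function.update_of_ne (Finset.ne_of_mem_erase hj)]
  unfold resid
  rw [e, e, Matrix.mulVec_sub]
  abel

lemma bh_h_update {K N : ℕ} (h : Fin K → (Fin N → ℝ) → ℝ)
    (w : Fin K → Fin N → ℝ) (k : Fin K) (y z : Fin N → ℝ) :
    ∑ j, h j (Function.update w k z j) - ∑ j, h j (Function.update w k y j) = h k z - h k y := by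
  have e : ∀ y, ∑ j, h j (Function.update w k y j) =
      h k y + ∑ j ∈ Finset.univ.erase k, h j (w j) := by
    intro y
    rw [← Finset.add_sum_erase _ _ (Finset.mem_univ k)]
    congr 1
    · simp
    · refine Finset.sum_congr rfl fun j hj => ?_
      rw [Function.update_of_ne (Finset.ne_of_mem_erase hj)]
  rw [e, e]; ring

lemma bh_opt {K M N : ℕ} (A : Fin K → Matrix (Fin M) (Fin N) ℝ) (b : Fin M → ℝ)
    (X : Fin K → Set (Fin N → ℝ)) (h : Fin K → (Fin N → ℝ) → ℝ)
    (hXcv : ∀ k, Convex ℝ (X k)) (hhcv : ∀ k, ConvexOn ℝ Set.univ (h k))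
    (x xp : Fin K → Fin N → ℝ) (hs : BCDStep A b h X x xp) (k : Fin K)
    (y : Fin N → ℝ) (hy : y ∈ X k) :
    0 ≤ resid A b (Function.update (wpt x xp k) k (xp k)) ⬝ᵥ (A k).mulVec (y - xp k)
      + (h k y - h k (xp k)) := by
  obtain ⟨hx, hmin⟩ := hs k
  set ρ := resid A b (Function.update (wpt x xp k) k (xp k)) with hρ
  set d := (A k).mulVec (y - xp k) with hd
  have key : ∀ t : ℝ, 0 < t → t ≤ 1 → 0 ≤ ρ ⬝ᵥ d + (h k y - h k (xp k)) + t * (sqnorm d / 2) := by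
    intro t ht ht1
    have hz : (1 - t) • xp k + t • y ∈ X k :=
      hXcv k hx hy (by linarith) ht.le (by ring)
    have h1 := hmin _ hz
    have h2 := (hhcv k).2 (Set.mem_univ (xp k)) (Set.mem_univ y)
      (by linarith : (0:ℝ) ≤ 1 - t) ht.le (by ring)
    have h3 := bh_h_update h (wpt x xp k) k (xp k) ((1 - t) • xp k + t • y)
    have e : (1 - t) • xp k + t • y - xp k = t • (y - xp k) := by module
    unfold fq gq at h1
    rw [bh_resid_update A b (wpt x xp k) k (xp k) ((1 - t) • xp k + t • y), e,
      Matrix.mulVec_smul, ← hρ, ← hd, bh_add, bh_smul, dotProduct_smul] at h1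
    simp only [smul_eq_mul] at h1 h2
    refine le_of_mul_le_mul_left ?_ ht
    nlinarith
  by_contra hneg
  push Not at hneg
  set g := ρ ⬝ᵥ d + (h k y - h k (xp k)) with hg
  have hD : 0 ≤ sqnorm d := bh_nn d
  have hden : 0 < sqnorm d - g := by linarith
  have := key (-g / (sqnorm d - g)) (div_pos (by linarith) hden)
    ((div_le_one hden).2 (by linarith))
  have h4 : -g / (sqnorm d - g) * (sqnorm d / 2) ≤ -g / 2 := by
    rw [div_mul_eq_mul_div, div_le_iff₀ hden]
    nlinarith
  linarith

lemma bh_update_eq {K N : ℕ} (x xp : Fin K → Fin N → ℝ) (k : Fin K) :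
    Function.update (wpt x xp k) k (xp k) = fun j => if j ≤ k then xp j else x j := by
  funext j
  by_cases hj : j = k
  · subst hj; simp
  · rw [Function.update_of_ne hj]
    simp [wpt, lt_iff_le_and_ne, hj]

lemma bh_mono {K M N : ℕ} (A : Fin K → Matrix (Fin M) (Fin N) ℝ) (b : Fin M → ℝ)
    (X : Fin K → Set (Fin N → ℝ)) (h : Fin K → (Fin N → ℝ) → ℝ)
    (x xp : Fin K → Fin N → ℝ) (hs : BCDStep A b h X x xp) (hx : ∀ k, x k ∈ X k) :
    fq A b h xp ≤ fq A b h x := by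
  have key : ∀ n ≤ K, fq A b h (fun j => if j.val < n then xp j else x j) ≤ fq A b h x := by
    intro n
    induction n with
    | zero => intro _; simp
    | succ n ih =>
      intro hn
      refine le_trans ?_ (ih (by omega))
      have := (hs ⟨n, hn⟩).2 (x ⟨n, hn⟩) (hx _)
      rw [bh_update_eq] at this
      have f1 : (fun j : Fin K => if j.val < n + 1 then xp j else x j) =
          fun j => if j ≤ ⟨n, hn⟩ then xp j else x j := by
        funext j
        simp [Fin.le_def, Nat.lt_succ_iff]
      have f2 : (fun j : Fin K => if j.val < n then xp j else x j) =
          Function.update (wpt x xp ⟨n, hn⟩) ⟨n, hn⟩ (x ⟨n, hn⟩) := by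
        funext j
        by_cases hj : j = ⟨n, hn⟩
        · subst hj; simp
        · rw [Function.update_of_ne hj]
          simp [wpt, Fin.lt_def]
      rw [f1, f2]
      exact this
  have := key K le_rfl
  simpa using this

lemma bh_resid_diff {K M N : ℕ} (A : Fin K → Matrix (Fin M) (Fin N) ℝ) (b : Fin M → ℝ)
    (x xp : Fin K → Fin N → ℝ) (k : Fin K) :
    resid A b xp - resid A b (Function.update (wpt x xp k) k (xp k)) =
      ∑ j, if k < j then (A j).mulVec (xp j - x j) else 0 := by
  rw [bh_update_eq]
  unfold resid
  rw [sub_sub_sub_cancel_right, ← Finset.sum_sub_distrib]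
  refine Finset.sum_congr rfl fun j _ => ?_
  by_cases hj : j ≤ k
  · simp [hj, not_lt.2 hj]
  · simp [hj, not_le.1 hj, Matrix.mulVec_sub]

lemma bh_gap {K M N : ℕ} (A : Fin K → Matrix (Fin M) (Fin N) ℝ) (b : Fin M → ℝ)
    (X : Fin K → Set (Fin N → ℝ)) (h : Fin K → (Fin N → ℝ) → ℝ)
    (hXcv : ∀ k, Convex ℝ (X k)) (hhcv : ∀ k, ConvexOn ℝ Set.univ (h k))
    (x xp : Fin K → Fin N → ℝ) (hs : BCDStep A b h X x xp)
    (z : Fin K → Fin N → ℝ) (hz : ∀ k, z k ∈ X k) :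
    fq A b h xp - fq A b h z ≤ ∑ k, ∑ j,
      (if k < j then ((A k).mulVec (xp k - z k) ⬝ᵥ (A j).mulVec (xp j - x j)) else 0) := by
  set ρ := resid A b xp with hρ
  have e1 : resid A b z = ρ + ∑ k, (A k).mulVec (z k - xp k) := by
    rw [hρ]; unfold resid
    simp only [Matrix.mulVec_sub, Finset.sum_sub_distrib]
    abel
  have e2 : ∀ k, ∑ j, (if k < j then
      ((A k).mulVec (xp k - z k) ⬝ᵥ (A j).mulVec (xp j - x j)) else 0) =
      (ρ - resid A b (Function.update (wpt x xp k) k (xp k))) ⬝ᵥ (A k).mulVec (xp k - z k) := by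
    intro k
    rw [hρ, bh_resid_diff, sum_dotProduct]
    refine Finset.sum_congr rfl fun j _ => ?_
    split_ifs
    · exact dotProduct_comm _ _
    · simp
  unfold fq gq
  rw [e1, bh_add, dotProduct_sum]
  have h1 := bh_nn (∑ k, (A k).mulVec (z k - xp k))
  have h2 : ∑ k, (h k (xp k) - h k (z k)) - ∑ k, ρ ⬝ᵥ (A k).mulVec (z k - xp k) ≤
      ∑ k, ∑ j, (if k < j then
      ((A k).mulVec (xp k - z k) ⬝ᵥ (A j).mulVec (xp j - x j)) else 0) := by
    rw [← Finset.sum_sub_distrib]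
    refine Finset.sum_le_sum fun k _ => ?_
    rw [e2, sub_dotProduct]
    have := bh_opt A b X h hXcv hhcv x xp hs k (z k) (hz k)
    have e3 : (A k).mulVec (xp k - z k) = - (A k).mulVec (z k - xp k) := by
      rw [← Matrix.mulVec_neg, neg_sub]
    rw [e3, dotProduct_neg, dotProduct_neg]
    linarith
  rw [Finset.sum_sub_distrib] at h2
  linarith

/-- Lemma 4, case 1: cost-to-go estimate of cyclic exact BCD
when each `A_k` has full column rank with `λ_min(A_kᵀA_k) ≥ σ_k²`. -/
theorem bcd_cost_to_go_col_rank {K M N : ℕ} (hK : 1 ≤ K) (hM : 1 ≤ M) (hN : 1 ≤ N)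
    (hNK : 3 ≤ N * K)
    (A : Fin K → Matrix (Fin M) (Fin N) ℝ) (b : Fin M → ℝ)
    (σ : Fin K → ℝ) (hσ : ∀ k, 0 < σ k) (hrank : ∀ k, σ k ^ 2 ≤ lamMinQ (A k))
    (X : Fin K → Set (Fin N → ℝ)) (h : Fin K → (Fin N → ℝ) → ℝ)
    (hXne : ∀ k, (X k).Nonempty) (hXcl : ∀ k, IsClosed (X k))
    (hXcv : ∀ k, Convex ℝ (X k))
    (hhcv : ∀ k, ConvexOn ℝ Set.univ (h k))
    (hhlsc : ∀ k, LowerSemicontinuous (h k))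
    (x : ℕ → Fin K → Fin N → ℝ) (hx0 : ∀ k, x 0 k ∈ X k)
    (hstep : ∀ r : ℕ, BCDStep A b h X (x r) (x (r + 1)))
    (xstar : Fin K → Fin N → ℝ) (hxstarX : ∀ k, xstar k ∈ X k)
    (hxstar : ∀ y : Fin K → Fin N → ℝ, (∀ k, y k ∈ X k) → fq A b h xstar ≤ fq A b h y)
    (R0 : ℝ)
    (hR0 : ∀ z : Fin K → Fin N → ℝ, (∀ k, z k ∈ X k) → fq A b h z ≤ fq A b h (x 0) →
      ∀ y : Fin K → Fin N → ℝ, (∀ k, y k ∈ X k) →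
        (∀ z' : Fin K → Fin N → ℝ, (∀ k, z' k ∈ X k) → fq A b h y ≤ fq A b h z') →
        Real.sqrt (∑ k, sqnorm (z k - y k)) ≤ R0)
    (r : ℕ) :
    fq A b h (x (r + 1)) - fq A b h xstar ≤
      R0 * (1 / minOf hK σ) * Real.log (2 * (N : ℝ) * (K : ℝ)) *
        (lamMaxBlock A + maxOf hK (fun k => lamMaxQ (A k))) *
        Real.sqrt (∑ k, σ k ^ 2 * sqnorm (x (r + 1) k - x r k)) := by
  have hX : ∀ n k, x n k ∈ X k := by
    intro n
    cases n with
    | zero => exact hx0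
    | succ n => exact fun k => (hstep n k).1
  have hmono : ∀ n, fq A b h (x n) ≤ fq A b h (x 0) := by
    intro n
    induction n with
    | zero => exact le_rfl
    | succ n ih => exact (bh_mono A b X h _ _ (hstep n) (hX n)).trans ih
  have hR := hR0 (x (r + 1)) (hX _) (hmono _) xstar hxstarX hxstar
  have hgap := bh_gap A b X h hXcv hhcv _ _ (hstep r) xstar hxstarX
  have htri := bh_tri hK A (fun k => x (r + 1) k - xstar k) (fun k => x (r + 1) k - x r k)
  have hσpos : 0 < minOf hK σ := by
    unfold minOf
    rw [Finset.lt_inf'_iff]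
    exact fun k _ => hσ k
  have hσle : ∀ k, minOf hK σ ≤ σ k := fun k => Finset.inf'_le _ (Finset.mem_univ k)
  have hmax : 0 ≤ maxOf hK (fun k => lamMaxQ (A k)) :=
    (bh_Lnn' (A ⟨0, hK⟩)).trans
      (Finset.le_sup' (fun k => lamMaxQ (A k)) (Finset.mem_univ (⟨0, hK⟩ : Fin K)))
  have hL := bh_Lnn A
  have hK' : (1 : ℝ) ≤ K := by exact_mod_cast hK
  have hN' : (1 : ℝ) ≤ N := by exact_mod_cast hN
  have hlog0 : 0 ≤ Real.log (2 * (K : ℝ)) := Real.log_nonneg (by linarith)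
  have hlog : Real.log (2 * (K : ℝ)) ≤ Real.log (2 * (N : ℝ) * (K : ℝ)) :=
    Real.log_le_log (by linarith) (by nlinarith)
  have hd : √(∑ k, sqnorm (x (r + 1) k - x r k)) ≤
      1 / minOf hK σ * √(∑ k, σ k ^ 2 * sqnorm (x (r + 1) k - x r k)) := by
    rw [one_div, ← div_eq_inv_mul, le_div_iff₀ hσpos]
    apply Real.le_sqrt_of_sq_le
    rw [mul_pow, Real.sq_sqrt (Finset.sum_nonneg fun k _ => bh_nn _), mul_comm, Finset.mul_sum]
    refine Finset.sum_le_sum fun k _ => mul_le_mul_of_nonneg_right ?_ (bh_nn _)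
    exact pow_le_pow_left₀ hσpos.le (hσle k) 2
  have hR0nn : 0 ≤ R0 := (Real.sqrt_nonneg _).trans hR
  refine (hgap.trans htri).trans ?_
  calc _ ≤ Real.log (2 * (N : ℝ) * (K : ℝ)) *
        (lamMaxBlock A + maxOf hK (fun k => lamMaxQ (A k))) *
        (R0 * (1 / minOf hK σ * √(∑ k, σ k ^ 2 * sqnorm (x (r + 1) k - x r k)))) := by
        have hlog1 := hlog0.trans hlog
        refine mul_le_mul (mul_le_mul hlog (by linarith) hL hlog1)
          (mul_le_mul hR hd (Real.sqrt_nonneg _) hR0nn) (by positivity) (by positivity)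
    _ = _ := by ring
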